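/- If k convex sets S_1, ..., S_k cover a Euclidean ball of radius r in R^d, then there exists an index i such that S_i contains a Euclidean ball of radius r/(k·d^d). -/

import Mathlib

/-!
A bounded convex set `T` in an `n`-dimensional space that contains no ball of radius `ρ` lies in a
plank of half-width `n * ρ`. Indeed, by Helly's theorem there is a point `x` dividing every chord of
`closure T` through it in a ratio at most `n : 1`. The ball of radius `ρ` around `x` has a point
outside `T`; separating that point from `T` bounds `T` on one side by a hyperplane within `ρ` of
`x`, and by the choice of `x` the set `T` extends at most `n * ρ` to the other side.

If convex sets `S i` cover a ball of radius `r` and no `S i` contains a ball of radius `ρ i`, the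
ball is therefore covered by planks of half-widths `n * ρ i`. Bang's lemma forces
`r < n * ∑ i, ρ i`: if `a i` is normal to the `i`-th plank, with its half-width as length, then for
suitable signs the sum of the vectors `± a i` lies in none of the planks.
-/

open AffineMap Module Set

section Separation

variable {E : Type*} [NormedAddCommGroup E]

theorem exists_strongDual_ne_zero_forall_eq [NormedSpace ℝ E] [FiniteDimensional ℝ E]
    [Nontrivial E] {T : Set E} (hT : Convex ℝ T) (hint : interior T = ∅) :
    ∃ f : StrongDual ℝ E, f ≠ 0 ∧ ∀ y ∈ T, ∀ z ∈ T, f y = f z := by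
  have hspan : vectorSpan ℝ T < ⊤ := by
    rw [lt_top_iff_ne_top, Ne,
      ← AffineSubspace.affineSpan_eq_top_iff_vectorSpan_eq_top_of_nontrivial,
      ← hT.interior_nonempty_iff_affineSpan_eq_top, hint]
    exact not_nonempty_empty
  obtain ⟨f, hf, hker⟩ := (vectorSpan ℝ T).exists_le_ker_of_lt_top hspan
  refine ⟨f.toContinuousLinearMap, by simpa using hf, fun y hy z hz ↦ sub_eq_zero.mp ?_⟩
  simpa using hker (vsub_mem_vectorSpan ℝ hy hz)

theorem exists_strongDual_ne_zero_forall_le [NormedSpace ℝ E] [FiniteDimensional ℝ E]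
    [Nontrivial E] {T : Set E} (hT : Convex ℝ T) {y : E} (hy : y ∉ T) :
    ∃ f : StrongDual ℝ E, f ≠ 0 ∧ ∀ z ∈ T, f z ≤ f y := by
  rcases (interior T).eq_empty_or_nonempty with hint | hint
  · obtain ⟨f, hf, hconst⟩ := exists_strongDual_ne_zero_forall_eq hT hint
    by_cases hle : ∀ z ∈ T, f z ≤ f y
    · exact ⟨f, hf, hle⟩
    · obtain ⟨z₀, hz₀, hlt⟩ : ∃ z₀ ∈ T, f y < f z₀ := by simpa using hle
      refine ⟨-f, neg_ne_zero.mpr hf, fun z hz ↦ neg_le_neg ?_⟩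
      exact hlt.le.trans_eq (hconst z₀ hz₀ z hz)
  · exact geometric_hahn_banach_of_nonempty_interior_point hT
      (fun h ↦ hy (interior_subset h)) hint

variable [InnerProductSpace ℝ E]

theorem exists_norm_eq_one_forall_inner_le [FiniteDimensional ℝ E] [Nontrivial E] {T : Set E}
    (hT : Convex ℝ T) {y : E} (hy : y ∉ T) :
    ∃ u : E, ‖u‖ = 1 ∧ ∀ z ∈ T, inner ℝ u z ≤ inner ℝ u y := by
  obtain ⟨f, hf, hle⟩ := exists_strongDual_ne_zero_forall_le hT hy
  set v := (InnerProductSpace.toDual ℝ E).symm f with hv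
  have hv0 : v ≠ 0 := by simpa [hv] using hf
  refine ⟨‖v‖⁻¹ • v, norm_smul_inv_norm hv0, fun z hz ↦ ?_⟩
  rw [real_inner_smul_left, real_inner_smul_left]
  gcongr
  simpa [hv] using hle z hz

theorem inner_left_injective_of_finrank_eq_one (hE : finrank ℝ E = 1) {u : E} (hu : u ≠ 0) :
    Function.Injective (fun x : E ↦ inner ℝ u x) := by
  have : FiniteDimensional ℝ E := .of_finrank_pos (by lia)
  have hf : (innerₛₗ ℝ u : E →ₗ[ℝ] ℝ) ≠ 0 := fun h ↦
    hu (inner_self_eq_zero.mp (LinearMap.congr_fun h u))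
  exact (LinearMap.injective_iff_surjective_of_finrank_eq_finrank (by simpa using hE)).mpr
    (LinearMap.surjective hf)

end Separation

section HellyCenter

theorem sum_smul_mem_homothety_image {𝕜 E ι : Type*} [Field 𝕜] [LinearOrder 𝕜]
    [IsStrictOrderedRing 𝕜] [AddCommGroup E] [Module 𝕜 E] {K : Set E} (hK : Convex 𝕜 K)
    {s : Finset ι} {w : ι → 𝕜} {p : ι → E} (hw₀ : ∀ j ∈ s, 0 ≤ w j) (hw₁ : ∑ j ∈ s, w j = 1)
    (hp : ∀ j ∈ s, p j ∈ K) {i : ι} (hi : i ∈ s) {t : 𝕜} (ht : 0 < t) (hwi : 1 - t ≤ w i) :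
    ∑ j ∈ s, w j • p j ∈ homothety (p i) t '' K := by
  classical
  refine ⟨∑ j ∈ s, (t⁻¹ * (w j - if j = i then 1 - t else 0)) • p j,
    hK.sum_mem (fun j hj ↦ mul_nonneg (inv_nonneg.mpr ht.le) ?_) ?_ hp, ?_⟩
  · split_ifs with hji
    · exact sub_nonneg.mpr (hji ▸ hwi)
    · simpa using hw₀ j hj
  · rw [← Finset.mul_sum, Finset.sum_sub_distrib, hw₁, Finset.sum_ite_eq', if_pos hi,
      sub_sub_cancel, inv_mul_cancel₀ ht.ne']
  · simp only [homothety_apply, vsub_eq_sub, vadd_eq_add, smul_sub, Finset.smul_sum, smul_smul,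
      mul_inv_cancel_left₀ ht.ne', sub_smul, ite_smul, zero_smul, Finset.sum_sub_distrib,
      Finset.sum_ite_eq', if_pos hi, one_smul]
    abel

theorem exists_forall_mem_homothety_image {E : Type*} [AddCommGroup E] [Module ℝ E]
    [TopologicalSpace E] [IsTopologicalAddGroup E] [ContinuousSMul ℝ E] [T2Space E]
    [FiniteDimensional ℝ E] [Nontrivial E] {K : Set E} (hK : Convex ℝ K) (hKc : IsCompact K) :
    ∃ x, ∀ y ∈ K, x ∈ homothety y (finrank ℝ E / (finrank ℝ E + 1) : ℝ) '' K := by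
  set n := finrank ℝ E
  have hn₀ : (0 : ℝ) < n := mod_cast finrank_pos
  suffices h : (⋂ y : K, homothety (y : E) (n / (n + 1) : ℝ) '' K).Nonempty by
    obtain ⟨x, hx⟩ := h
    exact ⟨x, fun y hy ↦ mem_iInter.mp hx ⟨y, hy⟩⟩
  refine Convex.helly_theorem_compact' (𝕜 := ℝ) (fun y ↦ hK.affine_image _)
    (fun y ↦ hKc.image (homothety_continuous _ _)) fun I hI ↦ ?_
  -- The average of at most `n + 1` points of `K` gives each of them weight at least `1 / (n + 1)`.
  refine ⟨∑ j ∈ I, (I.card : ℝ)⁻¹ • (j : E), mem_iInter₂.mpr fun i hi ↦ ?_⟩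
  have hcard : (0 : ℝ) < I.card := mod_cast Finset.card_pos.mpr ⟨i, hi⟩
  refine sum_smul_mem_homothety_image (p := fun j : K ↦ (j : E)) hK (fun _ _ ↦ by positivity) ?_
    (fun j _ ↦ j.2) hi (by positivity) ?_
  · rw [Finset.sum_const, nsmul_eq_mul, mul_inv_cancel₀ hcard.ne']
  · calc 1 - (n / (n + 1) : ℝ) = ((n : ℝ) + 1)⁻¹ := by field_simp; ring
      _ ≤ (I.card : ℝ)⁻¹ := inv_anti₀ hcard (mod_cast hI)

end HellyCenter

section Planks

variable {ι E : Type*} [NormedAddCommGroup E] [InnerProductSpace ℝ E]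

/-- The half-open plank with centre `p` and normal direction `a`, whose half-width is encoded as
the length of `a`. For `a = 0` it is empty. -/
def plank (a p : E) : Set E :=
  {x | inner ℝ a (x - p) ∈ Ico (-‖a‖ ^ 2) (‖a‖ ^ 2)}

theorem mem_plank_smul_iff {u p x : E} {w : ℝ} (hu : ‖u‖ = 1) (hw : 0 < w) :
    x ∈ plank (w • u) p ↔ inner ℝ u (x - p) ∈ Ico (-w) w := by
  have hnorm : ‖w • u‖ = w := by rw [norm_smul, hu, mul_one, Real.norm_of_nonneg hw.le]
  simp only [plank, mem_ofPred_eq, hnorm, real_inner_smul_left, mem_Ico, sq, ← mul_neg,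
    mul_le_mul_iff_right₀ hw, mul_lt_mul_iff_right₀ hw]

theorem add_mem_plank_iff {a p c x : E} : c + x ∈ plank a p ↔ x ∈ plank a (p - c) := by
  rw [plank, plank, mem_ofPred_eq, mem_ofPred_eq, sub_sub_eq_add_sub, add_comm]

/-- The quadratic function that Bang's lemma maximizes over signs `ε i`, for the planks
`plank (a i) (p i)`. -/
def bangEnergy [Fintype ι] (a p : ι → E) (ε : ι → ℝ) : ℝ :=
  ‖∑ i, ε i • a i‖ ^ 2 - 2 * ∑ i, ε i * inner ℝ (a i) (p i)

theorem bangEnergy_add_single [Fintype ι] [DecidableEq ι] (a p : ι → E) (ε : ι → ℝ) (i : ι)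
    (s : ℝ) :
    bangEnergy a p (ε + Pi.single i s) =
      bangEnergy a p ε + 2 * s * inner ℝ (a i) (∑ j, ε j • a j - p i) + s ^ 2 * ‖a i‖ ^ 2 := by
  have hvec : ∑ j, (ε + Pi.single i s : ι → ℝ) j • a j = ∑ j, ε j • a j + s • a i := by
    simp [add_smul, Finset.sum_add_distrib, Pi.single_apply, ite_smul]
  have hlin : ∑ j, (ε + Pi.single i s : ι → ℝ) j * inner ℝ (a j) (p j) =
      ∑ j, ε j * inner ℝ (a j) (p j) + s * inner ℝ (a i) (p i) := by
    simp [add_mul, Finset.sum_add_distrib, Pi.single_apply]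
  rw [bangEnergy, bangEnergy, hvec, hlin, norm_add_sq_real, real_inner_smul_right, norm_smul,
    mul_pow, Real.norm_eq_abs, sq_abs, real_inner_comm, inner_sub_right]
  ring

theorem exists_signs_forall_sum_smul_notMem_plank [Fintype ι] (a p : ι → E) :
    ∃ ε : ι → ℝ, (∀ i, |ε i| = 1) ∧ ∀ i, ∑ j, ε j • a j ∉ plank (a i) (p i) := by
  classical
  let signs : Finset (ι → ℝ) := Fintype.piFinset fun _ ↦ {-1, 1}
  have mem_signs {ε : ι → ℝ} : ε ∈ signs ↔ ∀ i, ε i = -1 ∨ ε i = 1 := by simp [signs]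
  -- Ties are broken in favour of the sign `1`, which makes one of the two inequalities strict.
  obtain ⟨ε, hε, hmax⟩ := signs.exists_max_image (fun ε ↦ toLex (bangEnergy a p ε, ∑ j, ε j))
    ⟨1, mem_signs.mpr fun _ ↦ .inr rfl⟩
  rw [mem_signs] at hε
  have flip_le (i : ι) (s : ℝ) (hs : ε i + s = -1 ∨ ε i + s = 1) :=
    hmax (ε + Pi.single i s) <| mem_signs.mpr fun j ↦ by
      rcases eq_or_ne j i with rfl | hj
      · simpa using hs
      · simpa [hj] using hε j
  simp only [Prod.Lex.toLex_le_toLex, bangEnergy_add_single, Pi.add_apply, Finset.sum_add_distrib,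
    Finset.sum_pi_single', Finset.mem_univ, if_true] at flip_le
  refine ⟨ε, fun i ↦ by rcases hε i with h | h <;> simp [h], fun i hi ↦ ?_⟩
  obtain ⟨hlow, hhigh⟩ := hi
  rcases hε i with hεi | hεi
  · have hbelow : inner ℝ (a i) (∑ j, ε j • a j - p i) < -‖a i‖ ^ 2 := by
      rcases flip_le i 2 (.inr (by linarith)) with h | h <;> linarith
    exact hbelow.not_ge hlow
  · have habove : ‖a i‖ ^ 2 ≤ inner ℝ (a i) (∑ j, ε j • a j - p i) := by
      rcases flip_le i (-2) (.inl (by linarith)) with h | h <;> linarith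
    exact habove.not_gt hhigh

theorem exists_mem_closedBall_forall_notMem_plank [Fintype ι] (a p : ι → E) (c : E) {r : ℝ}
    (hr : ∑ i, ‖a i‖ ≤ r) : ∃ x ∈ Metric.closedBall c r, ∀ i, x ∉ plank (a i) (p i) := by
  obtain ⟨ε, hε, hx⟩ := exists_signs_forall_sum_smul_notMem_plank a (fun i ↦ p i - c)
  refine ⟨c + ∑ i, ε i • a i, ?_, fun i hi ↦ hx i (add_mem_plank_iff.mp hi)⟩
  rw [mem_closedBall_iff_norm, add_sub_cancel_left]
  calc ‖∑ i, ε i • a i‖ ≤ ∑ i, ‖ε i • a i‖ := norm_sum_le _ _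
    _ = ∑ i, ‖a i‖ := by simp only [norm_smul, Real.norm_eq_abs, hε, one_mul]
    _ ≤ r := hr

end Planks

section Inradius

variable {E : Type*} [NormedAddCommGroup E] [InnerProductSpace ℝ E]

theorem neg_mul_le_inner_sub_of_mem_homothety_image {K : Set E} {x y u : E} {n b : ℝ}
    (hn : 0 ≤ n) (hx : x ∈ homothety y (n / (n + 1)) '' K)
    (hb : ∀ z ∈ K, inner ℝ u (z - x) ≤ b) : -(n * b) ≤ inner ℝ u (y - x) := by
  obtain ⟨z, hz, hzx⟩ := hx
  have hchord : y - x = -(n • (z - x)) := by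
    rw [← hzx, homothety_apply, vsub_eq_sub, vadd_eq_add]
    match_scalars <;> field_simp <;> ring
  rw [hchord, inner_neg_right, real_inner_smul_right]
  gcongr
  exact hb z hz

variable [FiniteDimensional ℝ E] [Nontrivial E]

theorem inner_sub_lt_finrank_mul {T : Set E} {u x y : E} (hy : y ∉ T) (hu : u ≠ 0)
    (hsupp : ∀ z ∈ T, inner ℝ u (z - x) ≤ inner ℝ u (y - x)) {ρ : ℝ} (hρ : 0 < ρ)
    (hyρ : inner ℝ u (y - x) ≤ ρ) : ∀ z ∈ T, inner ℝ u (z - x) < finrank ℝ E * ρ := by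
  intro z hz
  rcases (Nat.one_le_iff_ne_zero.mpr (finrank_pos (R := ℝ) (M := E)).ne').eq_or_lt with hn | hn
  · -- There is no room between `ρ` and `1 * ρ`, but on a line only `y ∉ T` attains the bound.
    have hne : inner ℝ u (z - x) ≠ inner ℝ u (y - x) := fun h ↦ hy <|
      sub_left_injective (inner_left_injective_of_finrank_eq_one hn.symm hu h) ▸ hz
    calc inner ℝ u (z - x) < inner ℝ u (y - x) := (hsupp z hz).lt_of_ne hne
      _ ≤ finrank ℝ E * ρ := by rwa [← hn, Nat.cast_one, one_mul]
  · calc inner ℝ u (z - x) ≤ ρ := (hsupp z hz).trans hyρ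
      _ < finrank ℝ E * ρ := lt_mul_of_one_lt_left hρ (mod_cast hn)

theorem exists_subset_plank_of_forall_not_closedBall_subset {T : Set E} (hT : Convex ℝ T)
    (hTb : Bornology.IsBounded T) {ρ : ℝ} (hρ : 0 < ρ)
    (hball : ∀ c, ¬ Metric.closedBall c ρ ⊆ T) :
    ∃ a p : E, ‖a‖ = finrank ℝ E * ρ ∧ T ⊆ plank a p := by
  set n := finrank ℝ E
  have hnρ : 0 < n * ρ := mul_pos (mod_cast finrank_pos) hρ
  obtain ⟨x, hx⟩ := exists_forall_mem_homothety_image hT.closure hTb.isCompact_closure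
  obtain ⟨y, hyx, hyT⟩ := not_subset.mp (hball x)
  obtain ⟨u, hu, hle⟩ := exists_norm_eq_one_forall_inner_le hT hyT
  have hsupp : ∀ z ∈ T, inner ℝ u (z - x) ≤ inner ℝ u (y - x) := fun z hz ↦ by
    simpa only [inner_sub_right, sub_le_sub_iff_right] using hle z hz
  have hyρ : inner ℝ u (y - x) ≤ ρ := by
    calc inner ℝ u (y - x) ≤ ‖u‖ * ‖y - x‖ := real_inner_le_norm u (y - x)
      _ ≤ ρ := by rw [hu, one_mul]; exact mem_closedBall_iff_norm.mp hyx
  have hclosure : ∀ z ∈ closure T, inner ℝ u (z - x) ≤ ρ :=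
    closure_minimal (t := {z | inner ℝ u (z - x) ≤ ρ})
      (fun z hz ↦ (hsupp z hz).trans hyρ)
      (isClosed_le (by fun_prop) continuous_const)
  refine ⟨(n * ρ) • u, x, by rw [norm_smul, hu, mul_one, Real.norm_of_nonneg hnρ.le],
    fun z hz ↦ (mem_plank_smul_iff hu hnρ).mpr ⟨?_, ?_⟩⟩
  · exact neg_mul_le_inner_sub_of_mem_homothety_image n.cast_nonneg (hx z (subset_closure hz))
      hclosure
  · exact inner_sub_lt_finrank_mul hyT (norm_ne_zero_iff.mp (by simp [hu])) hsupp hρ hyρ z hz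

end Inradius

theorem convex_cover_ball_general {ι E : Type*} [Fintype ι] [NormedAddCommGroup E]
    [InnerProductSpace ℝ E] [FiniteDimensional ℝ E] [Nontrivial E] {S : ι → Set E}
    (hS : ∀ i, Convex ℝ (S i)) {c : E} {r : ℝ} (hcov : Metric.closedBall c r ⊆ ⋃ i, S i)
    {ρ : ι → ℝ} (hρ : ∀ i, 0 < ρ i) (hsum : finrank ℝ E * ∑ i, ρ i ≤ r) :
    ∃ (i : ι) (c' : E), Metric.closedBall c' (ρ i) ⊆ S i := by
  by_contra! hball
  have hplank (i : ι) : ∃ a p : E, ‖a‖ = finrank ℝ E * ρ i ∧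
      S i ∩ Metric.closedBall c r ⊆ plank a p :=
    exists_subset_plank_of_forall_not_closedBall_subset ((hS i).inter (convex_closedBall c r))
      (Metric.isBounded_closedBall.subset inter_subset_right) (hρ i)
      fun c' h ↦ hball i c' (h.trans inter_subset_left)
  choose a p ha hsub using hplank
  obtain ⟨x, hx, hxp⟩ := exists_mem_closedBall_forall_notMem_plank a p c
    (by simpa only [ha, Finset.mul_sum] using hsum)
  obtain ⟨i, hi⟩ := mem_iUnion.mp (hcov hx)
  exact hxp i (hsub i ⟨hi, hx⟩)

theorem natCast_mul_mul_div_mul_pow_self_le (d k : ℕ) {r : ℝ} (hr : 0 ≤ r) :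
    d * (k * (r / (k * d ^ d))) ≤ r := by
  rcases eq_or_ne d 0 with rfl | hd
  · simpa using hr
  have hpow : (d : ℝ) ≤ d ^ d := mod_cast Nat.le_self_pow hd d
  calc (d : ℝ) * (k * (r / (k * d ^ d))) = r * (k * d / (k * d ^ d)) := by ring
    _ ≤ r := mul_le_of_le_one_right hr (div_le_one_of_le₀ (by gcongr) (by positivity))

theorem convex_cover_ball (d k : ℕ) (hd : 0 < d) (hk : 0 < k)
    (S : Fin k → Set (EuclideanSpace ℝ (Fin d))) (hS : ∀ i, Convex ℝ (S i))
    (c : EuclideanSpace ℝ (Fin d)) (r : ℝ) (hr : 0 < r)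
    (hcov : Metric.closedBall c r ⊆ ⋃ i, S i) :
    ∃ (i : Fin k) (c' : EuclideanSpace ℝ (Fin d)),
      Metric.closedBall c' (r / (k * d ^ d)) ⊆ S i := by
  have : NeZero d := ⟨hd.ne'⟩
  exact convex_cover_ball_general hS hcov (fun _ ↦ by positivity)
    (by simpa using natCast_mul_mul_div_mul_pow_self_le d k hr.le)
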